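/- arXiv:0712.0819 — 3 statements merged into one kernel-verified Lean document; each statement's English description precedes it below -/
import Mathlib

section
/- Let q be a complex-valued quadratic form on ℝ^{2n} which is elliptic on its singular space S, i.e., X ∈ S and q(X) = 0 imply X = 0. Then S is a symplectic subspace of ℝ^{2n}: the restriction of the canonical symplectic form σ to S is nondegenerate. -/
open Matrix

/-- The canonical symplectic form `σ((x,ξ),(y,η)) = ξ·y − x·η` on `R^{n+n}`,
where the first `n` coordinates are `x` and the last `n` coordinates are `ξ`.
Over `R = ℂ` this is the ℂ-bilinear extension of the real canonical symplectic form. -/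
def symp {R : Type*} [CommRing R] {n : ℕ} (X Y : Fin (n + n) → R) : R :=
  ∑ i : Fin n, (X (Fin.natAdd n i) * Y (Fin.castAdd n i)
    - X (Fin.castAdd n i) * Y (Fin.natAdd n i))

/-- The canonical inclusion `ℝ^{2n} ⊆ ℂ^{2n}`. -/
def cx {n : ℕ} (X : Fin (n + n) → ℝ) : Fin (n + n) → ℂ := fun i => (X i : ℂ)

/-- The real part of a complex matrix. -/
def ReM {n : ℕ} (F : Matrix (Fin (n + n)) (Fin (n + n)) ℂ) :
    Matrix (Fin (n + n)) (Fin (n + n)) ℝ := F.map Complex.re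

/-- The imaginary part of a complex matrix. -/
def ImM {n : ℕ} (F : Matrix (Fin (n + n)) (Fin (n + n)) ℂ) :
    Matrix (Fin (n + n)) (Fin (n + n)) ℝ := F.map Complex.im

/-- The singular space `S = (⋂_{j=0}^{2n−1} Ker[Re F ∘ (Im F)^j]) ∩ ℝ^{2n}`
associated to a quadratic form with Hamilton map `F`. -/
def singularSpace {n : ℕ} (F : Matrix (Fin (n + n)) (Fin (n + n)) ℂ) :
    Set (Fin (n + n) → ℝ) :=
  {X | ∀ j < n + n, (ReM F * ImM F ^ j).mulVec X = 0}

/-!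
By Cayley–Hamilton, the condition defining `S` holds for all powers of `Im F`, so that `Re F`
vanishes on `S` and `Im F` maps `S` to itself. Hence `q(X) = σ(X, FX) = i σ(X, (Im F) X)` for
`X ∈ S`, with `(Im F) X ∈ S`. If `X` is `σ`-orthogonal to `S`, then `q(X) = 0`, and ellipticity
gives `X = 0`.
-/

section KernelsOfPowers

variable {R l m : Type*} [CommRing R] [Fintype m] [DecidableEq m]

theorem matrix_pow_mem_span_pow_lt_card (A : Matrix m m R) (k : ℕ) :
    A ^ k ∈ Submodule.span R ((A ^ ·) '' Set.Iio (Fintype.card m)) := by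
  nontriviality R
  have hspan :=
    Submodule.span_range_natDegree_eq_adjoin A.charpoly_monic A.aeval_self_charpoly
  simp only [A.charpoly_natDegree_eq_dim, Finset.coe_image, Finset.coe_range] at hspan
  rw [hspan]
  exact pow_mem (Algebra.self_mem_adjoin_singleton R A) k

theorem mul_pow_mulVec_eq_zero_of_forall_lt_card {B : Matrix l m R} {A : Matrix m m R} {v : m → R}
    (h : ∀ j < Fintype.card m, (B * A ^ j) *ᵥ v = 0) (k : ℕ) : (B * A ^ k) *ᵥ v = 0 := by
  have hk := matrix_pow_mem_span_pow_lt_card A k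
  generalize A ^ k = M at hk ⊢
  induction hk using Submodule.span_induction with
  | mem M hM =>
    obtain ⟨j, hj, rfl⟩ := hM
    exact h j hj
  | zero => rw [Matrix.mul_zero, zero_mulVec]
  | add M N _ _ hM hN => rw [Matrix.mul_add, add_mulVec, hM, hN, add_zero]
  | smul c M _ hM => rw [Matrix.mul_smul, smul_mulVec, hM, smul_zero]

end KernelsOfPowers

section Symp

variable {R : Type*} [CommRing R] {n : ℕ}

theorem symp_zero_right (X : Fin (n + n) → R) : symp X 0 = 0 := by
  simp [symp]

theorem symp_add_right (X Y Z : Fin (n + n) → R) : symp X (Y + Z) = symp X Y + symp X Z := by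
  simp only [symp, Pi.add_apply, ← Finset.sum_add_distrib]
  exact Finset.sum_congr rfl fun i _ ↦ by ring

theorem symp_smul_right (c : R) (X Y : Fin (n + n) → R) : symp X (c • Y) = c * symp X Y := by
  simp only [symp, Pi.smul_apply, smul_eq_mul, Finset.mul_sum]
  exact Finset.sum_congr rfl fun i _ ↦ by ring

theorem symp_cx_cx (X Y : Fin (n + n) → ℝ) : symp (cx X) (cx Y) = (symp X Y : ℝ) := by
  simp [symp, cx]

end Symp

section SingularSpace

variable {n : ℕ} {F : Matrix (Fin (n + n)) (Fin (n + n)) ℂ} {X : Fin (n + n) → ℝ}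

theorem mulVec_cx (F : Matrix (Fin (n + n)) (Fin (n + n)) ℂ) (X : Fin (n + n) → ℝ) :
    F *ᵥ cx X = cx (ReM F *ᵥ X) + Complex.I • cx (ImM F *ᵥ X) := by
  ext i
  apply Complex.ext <;> simp [mulVec, dotProduct, ReM, ImM, cx]

theorem symp_cx_mulVec_cx (F : Matrix (Fin (n + n)) (Fin (n + n)) ℂ) (X Y : Fin (n + n) → ℝ) :
    symp (cx X) (F *ᵥ cx Y) =
      (symp X (ReM F *ᵥ Y) : ℝ) + Complex.I * (symp X (ImM F *ᵥ Y) : ℝ) := by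
  rw [mulVec_cx, symp_add_right, symp_smul_right, symp_cx_cx, symp_cx_cx]

theorem mem_singularSpace_iff_forall_pow :
    X ∈ singularSpace F ↔ ∀ k, (ReM F * ImM F ^ k) *ᵥ X = 0 := by
  refine ⟨fun hX ↦ mul_pow_mulVec_eq_zero_of_forall_lt_card ?_, fun hX j _ ↦ hX j⟩
  rwa [Fintype.card_fin]

theorem ReM_mulVec_eq_zero_of_mem_singularSpace (hX : X ∈ singularSpace F) :
    ReM F *ᵥ X = 0 := by
  simpa using mem_singularSpace_iff_forall_pow.mp hX 0

theorem ImM_mulVec_mem_singularSpace (hX : X ∈ singularSpace F) :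
    ImM F *ᵥ X ∈ singularSpace F := by
  refine mem_singularSpace_iff_forall_pow.mpr fun k ↦ ?_
  rw [mulVec_mulVec, Matrix.mul_assoc, ← pow_succ]
  exact mem_singularSpace_iff_forall_pow.mp hX (k + 1)

theorem symp_cx_mulVec_cx_of_mem_singularSpace (Y : Fin (n + n) → ℝ) (hX : X ∈ singularSpace F) :
    symp (cx Y) (F *ᵥ cx X) = Complex.I * (symp Y (ImM F *ᵥ X) : ℝ) := by
  rw [symp_cx_mulVec_cx, ReM_mulVec_eq_zero_of_mem_singularSpace hX, symp_zero_right,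
    Complex.ofReal_zero, zero_add]

end SingularSpace

/-- If a complex-valued quadratic form `q` on `ℝ^{2n}` (with Hamilton
map `F`) is elliptic on its singular space `S`, then `S` is a symplectic subspace:
the restriction of the canonical symplectic form `σ` to `S` is nondegenerate. -/
theorem singularSpace_symplectic_of_elliptic_on_singularSpace
    (n : ℕ) (hn : 1 ≤ n)
    (q : (Fin (n + n) → ℂ) → ℂ)
    (F : Matrix (Fin (n + n)) (Fin (n + n)) ℂ)
    (hq : ∀ X : Fin (n + n) → ℂ, q X = symp X (F.mulVec X))
    (hskew : ∀ X Y : Fin (n + n) → ℂ, symp (F.mulVec X) Y = -symp X (F.mulVec Y))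
    (hell : ∀ X ∈ singularSpace F, q (cx X) = 0 → X = 0) :
    ∀ X ∈ singularSpace F, (∀ Y ∈ singularSpace F, symp X Y = 0) → X = 0 := by
  intro X hX hXS
  apply hell X hX
  have hσ : symp X (ImM F *ᵥ X) = 0 := hXS _ (ImM_mulVec_mem_singularSpace hX)
  calc
    q (cx X) = symp (cx X) (F *ᵥ cx X) := hq (cx X)
    _ = Complex.I * (symp X (ImM F *ᵥ X) : ℝ) := symp_cx_mulVec_cx_of_mem_singularSpace X hX
    _ = 0 := by rw [hσ, Complex.ofReal_zero, mul_zero]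
end

section
/- Let q be a complex-valued quadratic form on ℝ^{2n} with Re q(X) ≤ 0 for all X ∈ ℝ^{2n}, with Hamilton map F and singular space S. Then for every X ∈ ℝ^{2n} with X ∉ S, one has Σ_{j=0}^{2n−1} Re q((Im F)^j X) < 0. Consequently, if S is symplectic, the quadratic form r(X) = Σ_{j=0}^{2n−1} Re q((Im F)^j X) is negative definite on the symplectic orthogonal S^{σ⊥}. -/
open Matrix

/-! A symmetric negative semidefinite form vanishes at `x` only if `x` lies in its radical, by
Cauchy–Schwarz. Apply this to `Re q (X) = σ(X, (Re F) X)`: since `σ` is nondegenerate, the radical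
is `Ker (Re F)`. Hence each term `Re q ((Im F)^j X)` is nonpositive, and if all of them vanish then
`(Re F) (Im F)^j X = 0` for every `j < 2n`, that is, `X ∈ S`. When `S` is symplectic,
`S ∩ S^{σ⊥} = 0`, so a nonzero vector of `S^{σ⊥}` is outside `S`. -/

section BilinearForm

variable {R M : Type*} [CommRing R] [AddCommGroup M] [Module R M]
  {ω : LinearMap.BilinForm R M} {T : M →ₗ[R] M}

theorem isSymm_compl₂_of_isSkewAdjoint (hω : ω.IsAlt) (hT : ω.IsSkewAdjoint T) :
    LinearMap.IsSymm (ω.compl₂ T) where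
  eq x y := calc
    ω x (T y) = -ω (T y) x := (hω.neg_eq _ _).symm
    _ = ω y (T x) := by rw [hT y x, Pi.neg_apply, map_neg, neg_neg]

variable [LinearOrder R] [IsStrictOrderedRing R]

theorem apply_map_self_eq_zero_iff (hω : ω.IsAlt) (hsep : ω.SeparatingRight)
    (hT : ω.IsSkewAdjoint T) (hnonpos : ∀ x, ω x (T x) ≤ 0) {x : M} :
    ω x (T x) = 0 ↔ T x = 0 := by
  refine ⟨fun hx ↦ hsep _ fun y ↦ ?_, fun hx ↦ by rw [hx, map_zero]⟩
  have hsymm := isSymm_compl₂_of_isSkewAdjoint hω hT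
  have hneg_symm : LinearMap.IsSymm (-ω.compl₂ T) := ⟨fun x y ↦ congrArg Neg.neg (hsymm.eq x y)⟩
  have hker : x ∈ LinearMap.ker (-ω.compl₂ T) :=
    (LinearMap.BilinForm.apply_apply_same_eq_zero_iff _
      (fun z ↦ neg_nonneg.mpr (hnonpos z)) hneg_symm).mp (neg_eq_zero.mpr hx)
  calc ω y (T x) = ω x (T y) := hsymm.eq y x
    _ = 0 := neg_eq_zero.mp (LinearMap.congr_fun (LinearMap.mem_ker.mp hker) y)

theorem sum_apply_map_self_neg_iff (hω : ω.IsAlt) (hsep : ω.SeparatingRight)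
    (hT : ω.IsSkewAdjoint T) (hnonpos : ∀ x, ω x (T x) ≤ 0) {ι : Type*} (s : Finset ι)
    (v : ι → M) : ∑ i ∈ s, ω (v i) (T (v i)) < 0 ↔ ∃ i ∈ s, T (v i) ≠ 0 := by
  have hsum_nonpos : ∑ i ∈ s, ω (v i) (T (v i)) ≤ 0 :=
    Finset.sum_nonpos fun i _ ↦ hnonpos (v i)
  rw [hsum_nonpos.lt_iff_ne, Ne, Finset.sum_eq_zero_iff_of_nonpos fun i _ ↦ hnonpos (v i)]
  simp only [apply_map_self_eq_zero_iff hω hsep hT hnonpos, not_forall, exists_prop, ne_eq]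

end BilinearForm

section SymplecticForm

variable (R : Type*) [CommRing R] (n : ℕ)

/-- The canonical symplectic form `symp`, bundled as a bilinear form so that Mathlib's theory of
alternating, nondegenerate and skew-adjoint maps applies to it. -/
def sympForm : LinearMap.BilinForm R (Fin (n + n) → R) :=
  ∑ i : Fin n,
    (.linMulLin (.proj (Fin.natAdd n i)) (.proj (Fin.castAdd n i)) -
      .linMulLin (.proj (Fin.castAdd n i)) (.proj (Fin.natAdd n i)))

variable {R n}

@[simp]
theorem sympForm_apply (X Y : Fin (n + n) → R) : sympForm R n X Y = symp X Y := by
  simp [sympForm, symp]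

theorem sympForm_isAlt : (sympForm R n).IsAlt := fun X ↦ by
  simp [symp, mul_comm]

theorem symp_append_zero_single (i : Fin n) (Y : Fin (n + n) → R) :
    symp (Fin.append 0 (Pi.single i 1)) Y = Y (Fin.castAdd n i) := by
  simp [symp, Pi.single_apply, -Fin.natAdd_eq_addNat]

theorem symp_append_single_zero (i : Fin n) (Y : Fin (n + n) → R) :
    symp (Fin.append (Pi.single i 1) 0) Y = -Y (Fin.natAdd n i) := by
  simp [symp, Pi.single_apply, -Fin.natAdd_eq_addNat]

theorem sympForm_separatingRight : (sympForm R n).SeparatingRight := fun Y hY ↦ by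
  simp only [sympForm_apply] at hY
  ext i
  refine Fin.addCases (fun i ↦ ?_) (fun i ↦ ?_) i
  · exact (symp_append_zero_single i Y).symm.trans (hY _)
  · exact neg_eq_zero.mp ((symp_append_single_zero i Y).symm.trans (hY _))

theorem isSkewAdjoint_sympForm_mulVecLin_iff {A : Matrix (Fin (n + n)) (Fin (n + n)) R} :
    (sympForm R n).IsSkewAdjoint A.mulVecLin ↔ ∀ X Y, symp (A *ᵥ X) Y = -symp X (A *ᵥ Y) :=
  forall₂_congr fun X Y ↦ by
    rw [Pi.neg_apply, map_neg, Matrix.mulVecLin_apply, Matrix.mulVecLin_apply, sympForm_apply,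
      sympForm_apply]

end SymplecticForm

section RealPart

variable {n : ℕ} (F : Matrix (Fin (n + n)) (Fin (n + n)) ℂ)

theorem re_mulVec_cx (X : Fin (n + n) → ℝ) (i : Fin (n + n)) :
    ((F *ᵥ cx X) i).re = (ReM F *ᵥ X) i := by
  simp [Matrix.mulVec, dotProduct, cx, ReM]

theorem re_symp_cx_mulVec_cx (X Y : Fin (n + n) → ℝ) :
    (symp (cx X) (F *ᵥ cx Y)).re = symp X (ReM F *ᵥ Y) := by
  simp only [symp, ← re_mulVec_cx]
  simp [cx]

theorem re_symp_mulVec_cx_cx (X Y : Fin (n + n) → ℝ) :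
    (symp (F *ᵥ cx X) (cx Y)).re = symp (ReM F *ᵥ X) Y := by
  simp only [symp, ← re_mulVec_cx]
  simp [cx]

variable {F}

theorem isSkewAdjoint_mulVecLin_ReM (hF : (sympForm ℂ n).IsSkewAdjoint F.mulVecLin) :
    (sympForm ℝ n).IsSkewAdjoint (ReM F).mulVecLin := by
  rw [isSkewAdjoint_sympForm_mulVecLin_iff] at hF ⊢
  intro X Y
  rw [← re_symp_mulVec_cx_cx, ← re_symp_cx_mulVec_cx, hF, Complex.neg_re]

theorem notMem_singularSpace_iff {X : Fin (n + n) → ℝ} :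
    X ∉ singularSpace F ↔
      ∃ j ∈ Finset.range (n + n), (ReM F).mulVecLin (ImM F ^ j *ᵥ X) ≠ 0 := by
  simp [singularSpace, Matrix.mulVec_mulVec]

theorem sum_re_symp_iterates_neg_iff (hF : (sympForm ℂ n).IsSkewAdjoint F.mulVecLin)
    (hre : ∀ X : Fin (n + n) → ℝ, (symp (cx X) (F *ᵥ cx X)).re ≤ 0) {X : Fin (n + n) → ℝ} :
    ∑ j ∈ Finset.range (n + n),
        (symp (cx (ImM F ^ j *ᵥ X)) (F *ᵥ cx (ImM F ^ j *ᵥ X))).re < 0 ↔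
      X ∉ singularSpace F := by
  have hnonpos : ∀ Y, sympForm ℝ n Y ((ReM F).mulVecLin Y) ≤ 0 := fun Y ↦ by
    rw [sympForm_apply, Matrix.mulVecLin_apply, ← re_symp_cx_mulVec_cx]
    exact hre Y
  rw [notMem_singularSpace_iff, ← sum_apply_map_self_neg_iff sympForm_isAlt
    sympForm_separatingRight (isSkewAdjoint_mulVecLin_ReM hF) hnonpos]
  simp only [re_symp_cx_mulVec_cx, sympForm_apply, Matrix.mulVecLin_apply]

end RealPart

/-- Let `q` be a complex-valued quadratic form on `ℝ^{2n}` with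
`Re q ≤ 0`, Hamilton map `F` and singular space `S`. Then for every `X ∉ S`,
`Σ_{j=0}^{2n−1} Re q((Im F)^j X) < 0`. Consequently, if `S` is symplectic, the
quadratic form `r(X) = Σ_{j=0}^{2n−1} Re q((Im F)^j X)` is negative definite on
the symplectic orthogonal `S^{σ⊥}`. -/
theorem sum_re_q_iterates_neg_outside_singularSpace
    (n : ℕ) (hn : 1 ≤ n)
    (q : (Fin (n + n) → ℂ) → ℂ)
    (F : Matrix (Fin (n + n)) (Fin (n + n)) ℂ)
    (hq : ∀ X : Fin (n + n) → ℂ, q X = symp X (F.mulVec X))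
    (hskew : ∀ X Y : Fin (n + n) → ℂ, symp (F.mulVec X) Y = -symp X (F.mulVec Y))
    (hre : ∀ X : Fin (n + n) → ℝ, (q (cx X)).re ≤ 0) :
    (∀ X : Fin (n + n) → ℝ, X ∉ singularSpace F →
      ∑ j ∈ Finset.range (n + n), (q (cx ((ImM F ^ j).mulVec X))).re < 0) ∧
    ((∀ X ∈ singularSpace F, (∀ Y ∈ singularSpace F, symp X Y = 0) → X = 0) →
      ∀ X : Fin (n + n) → ℝ, (∀ Y ∈ singularSpace F, symp X Y = 0) → X ≠ 0 →
        ∑ j ∈ Finset.range (n + n), (q (cx ((ImM F ^ j).mulVec X))).re < 0) := by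
  have hF := isSkewAdjoint_sympForm_mulVecLin_iff.mpr hskew
  simp only [hq] at hre ⊢
  have hneg (X : Fin (n + n) → ℝ) := sum_re_symp_iterates_neg_iff hF hre (X := X)
  exact ⟨fun X ↦ (hneg X).mpr,
    fun hS X hX hX0 ↦ (hneg X).mpr fun hXS ↦ hX0 (hS X hXS hX)⟩
end

section
/- Fix a ∈ ℝ with a ≠ 0, and consider the quadratic form q on ℝ^4 (with coordinates (x,v,ξ,η)) given by q(x,v,ξ,η) = −η² − v²/4 − i(vξ − a·x·η), which is the Weyl symbol (up to a constant) of the Kramers–Fokker–Planck operator with quadratic potential V(x) = a·x²/2. Then Re q ≤ 0 on ℝ^4, and the singular space of q is trivial: S = (⋂_{j=0}^{3} Ker[Re F ∘ (Im F)^j]) ∩ ℝ^4 = {0}, where F is the Hamilton map of q. -/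
open Matrix

/-- The Weyl symbol (up to a constant) of the Kramers–Fokker–Planck operator with
quadratic potential `V(x) = a·x²/2`: with coordinates `(x,v,ξ,η)` on `ℂ^4` given by
indices `(0,1,2,3)`, `q(x,v,ξ,η) = −η² − v²/4 − i(vξ − a·x·η)`. -/
noncomputable def qKFP (a : ℝ) (X : Fin (2 + 2) → ℂ) : ℂ :=
  -(X 3) ^ 2 - (X 1) ^ 2 / 4 - Complex.I * (X 1 * X 2 - (a : ℂ) * X 0 * X 3)

/-!
`Re F` only sees the velocity variables `(v, η)`: its kernel is `{v = η = 0}`. The transport part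
`Im F` sends `(x, 0, ξ, 0)` to `(0, a x / 2, 0, ξ / 2)`, so that for `a ≠ 0` a single application
of `Im F` makes the position variables `(x, ξ)` visible to `Re F`, and the kernels for `j = 0, 1`
already meet only at the origin.
-/

theorem castAdd_ne_natAdd {m n : ℕ} (i : Fin m) (j : Fin n) : Fin.castAdd n i ≠ Fin.natAdd m j :=
  Fin.ne_of_lt (i.isLt.trans_le (Nat.le_add_right m j))

section Symp

variable {R : Type*} [CommRing R] {n : ℕ}

theorem symp_add_left (X Y Z : Fin (n + n) → R) : symp (X + Y) Z = symp X Z + symp Y Z := by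
  simp only [symp, Pi.add_apply, ← Finset.sum_add_distrib]
  exact Finset.sum_congr rfl fun i _ ↦ by ring

theorem neg_symp (X Y : Fin (n + n) → R) : -symp X Y = symp Y X := by
  simp only [symp, ← Finset.sum_neg_distrib]
  exact Finset.sum_congr rfl fun i _ ↦ by ring

theorem symp_single_natAdd (i : Fin n) (Y : Fin (n + n) → R) :
    symp (Pi.single (Fin.natAdd n i) 1) Y = Y (Fin.castAdd n i) := by
  simp [symp, Pi.single_apply, castAdd_ne_natAdd, -Fin.natAdd_eq_addNat]

theorem symp_single_castAdd (i : Fin n) (Y : Fin (n + n) → R) :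
    symp (Pi.single (Fin.castAdd n i) 1) Y = -Y (Fin.natAdd n i) := by
  simp [symp, Pi.single_apply, (castAdd_ne_natAdd _ _).symm, -Fin.natAdd_eq_addNat]

theorem eq_of_forall_symp_eq {Y Z : Fin (n + n) → R} (h : ∀ X, symp X Y = symp X Z) : Y = Z := by
  ext k
  induction k using Fin.addCases with
  | left i => simpa only [symp_single_natAdd] using h (Pi.single (Fin.natAdd n i) 1)
  | right i => simpa only [symp_single_castAdd, neg_inj] using h (Pi.single (Fin.castAdd n i) 1)

theorem symp_two (X Y : Fin (2 + 2) → R) :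
    symp X Y = X 2 * Y 0 - X 0 * Y 2 + (X 3 * Y 1 - X 1 * Y 3) :=
  Fin.sum_univ_two _

/-- `F` is the Hamilton map of the quadratic form `q`: `q(X) = σ(X, FX)` with `F` skew for `σ`.
Skewness says that `(X, Y) ↦ σ(X, FY)` is symmetric, that is, the polarization of `q`. -/
structure IsHamiltonMap (q : (Fin (n + n) → R) → R)
    (F : Matrix (Fin (n + n)) (Fin (n + n)) R) : Prop where
  apply_eq : ∀ X, q X = symp X (F *ᵥ X)
  skew : ∀ X Y, symp (F *ᵥ X) Y = -symp X (F *ᵥ Y)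

namespace IsHamiltonMap

variable {q : (Fin (n + n) → R) → R} {F G : Matrix (Fin (n + n)) (Fin (n + n)) R}

theorem two_mul_symp_mulVec (hF : IsHamiltonMap q F) (X Y : Fin (n + n) → R) :
    2 * symp X (F *ᵥ Y) = q (X + Y) - q X - q Y := by
  have symm : symp Y (F *ᵥ X) = symp X (F *ᵥ Y) := by rw [← neg_symp, hF.skew, neg_neg]
  simp only [hF.apply_eq, mulVec_add, symp_add_left, symp_add_right, symm]
  ring

theorem unique (hF : IsHamiltonMap q F) (hG : IsHamiltonMap q G) (h2 : IsLeftRegular (2 : R)) :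
    F = G := by
  refine ext_of_mulVec_single fun i ↦ eq_of_forall_symp_eq fun X ↦ h2 ?_
  exact (hF.two_mul_symp_mulVec X _).trans (hG.two_mul_symp_mulVec X _).symm

end IsHamiltonMap

end Symp

section SingularSpace

variable {n : ℕ} {F : Matrix (Fin (n + n)) (Fin (n + n)) ℂ}

theorem mem_singularSpace_iff {X : Fin (n + n) → ℝ} :
    X ∈ singularSpace F ↔ ∀ j < n + n, ReM F *ᵥ (ImM F ^ j *ᵥ X) = 0 := by
  simp only [singularSpace, Set.mem_ofPred_eq, mulVec_mulVec]

theorem zero_mem_singularSpace : 0 ∈ singularSpace F :=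
  fun _ _ ↦ mulVec_zero _

end SingularSpace

section KramersFokkerPlanck

variable (a : ℝ)

/-- The matrix, in the coordinates `(x, v, ξ, η)`, of the Hamilton map of the
Kramers–Fokker–Planck symbol `qKFP a`. -/
noncomputable def kfpHamiltonMap : Matrix (Fin (2 + 2)) (Fin (2 + 2)) ℂ :=
  !![0, -Complex.I / 2, 0, 0;
     Complex.I * a / 2, 0, 0, -1;
     0, 0, 0, -Complex.I * a / 2;
     0, 1 / 4, Complex.I / 2, 0]

theorem kfpHamiltonMap_mulVec (X : Fin (2 + 2) → ℂ) :
    kfpHamiltonMap a *ᵥ X =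
      ![-Complex.I / 2 * X 1, Complex.I * a / 2 * X 0 - X 3, -Complex.I * a / 2 * X 3,
        1 / 4 * X 1 + Complex.I / 2 * X 2] := by
  ext i
  fin_cases i <;> simp [kfpHamiltonMap, mulVec, dotProduct, Fin.sum_univ_four, sub_eq_add_neg]

theorem isHamiltonMap_kfpHamiltonMap : IsHamiltonMap (qKFP a) (kfpHamiltonMap a) where
  apply_eq X := by
    simp only [qKFP, symp_two, kfpHamiltonMap_mulVec, cons_val]
    ring
  skew X Y := by
    simp only [symp_two, kfpHamiltonMap_mulVec, cons_val]
    ring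

theorem reM_kfpHamiltonMap_mulVec (X : Fin (2 + 2) → ℝ) :
    ReM (kfpHamiltonMap a) *ᵥ X = ![0, -X 3, 0, X 1 / 4] := by
  ext i
  fin_cases i <;>
    simp [ReM, kfpHamiltonMap, mulVec, dotProduct, Fin.sum_univ_four, div_eq_inv_mul]

theorem imM_kfpHamiltonMap_mulVec (X : Fin (2 + 2) → ℝ) :
    ImM (kfpHamiltonMap a) *ᵥ X = ![-X 1 / 2, a * X 0 / 2, -a * X 3 / 2, X 2 / 2] := by
  ext i
  fin_cases i <;>
    simp [ImM, kfpHamiltonMap, mulVec, dotProduct, Fin.sum_univ_four] <;> ring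

theorem reM_kfpHamiltonMap_mulVec_eq_zero_iff {X : Fin (2 + 2) → ℝ} :
    ReM (kfpHamiltonMap a) *ᵥ X = 0 ↔ X 1 = 0 ∧ X 3 = 0 := by
  simp [reM_kfpHamiltonMap_mulVec, and_comm]

variable {a} in
theorem singularSpace_kfpHamiltonMap (ha : a ≠ 0) : singularSpace (kfpHamiltonMap a) = {0} := by
  refine Set.Subset.antisymm (fun X hX ↦ ?_) (Set.singleton_subset_iff.2 zero_mem_singularSpace)
  rw [mem_singularSpace_iff] at hX
  obtain ⟨hv, hη⟩ : X 1 = 0 ∧ X 3 = 0 := by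
    simpa [reM_kfpHamiltonMap_mulVec_eq_zero_iff] using hX 0 (by decide)
  obtain ⟨hx, hξ⟩ : X 0 = 0 ∧ X 2 = 0 := by
    simpa [reM_kfpHamiltonMap_mulVec_eq_zero_iff, imM_kfpHamiltonMap_mulVec, ha]
      using hX 1 (by decide)
  ext i
  fin_cases i <;> assumption

theorem qKFP_cx_re (X : Fin (2 + 2) → ℝ) :
    (qKFP a (cx X)).re = -X 3 ^ 2 - X 1 ^ 2 / 4 := by
  simp [qKFP, cx, ← Complex.ofReal_pow]

theorem qKFP_cx_re_nonpos (X : Fin (2 + 2) → ℝ) : (qKFP a (cx X)).re ≤ 0 := by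
  rw [qKFP_cx_re]
  linarith [sq_nonneg (X 1), sq_nonneg (X 3)]

end KramersFokkerPlanck

/-- For `a ≠ 0`, the Kramers–Fokker–Planck quadratic symbol
`q(x,v,ξ,η) = −η² − v²/4 − i(vξ − a·x·η)` has `Re q ≤ 0` on `ℝ^4` and its singular
space `S = (⋂_{j=0}^{3} Ker[Re F ∘ (Im F)^j]) ∩ ℝ^4` is trivial, where `F` is its
Hamilton map. -/
theorem kramers_fokker_planck_singular_space_trivial
    (a : ℝ) (ha : a ≠ 0)
    (F : Matrix (Fin (2 + 2)) (Fin (2 + 2)) ℂ)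
    (hq : ∀ X : Fin (2 + 2) → ℂ, qKFP a X = symp X (F.mulVec X))
    (hskew : ∀ X Y : Fin (2 + 2) → ℂ, symp (F.mulVec X) Y = -symp X (F.mulVec Y)) :
    (∀ X : Fin (2 + 2) → ℝ, (qKFP a (cx X)).re ≤ 0) ∧
      singularSpace F = {0} := by
  have hF : IsHamiltonMap (qKFP a) F := ⟨hq, hskew⟩
  obtain rfl : F = kfpHamiltonMap a :=
    hF.unique (isHamiltonMap_kfpHamiltonMap a) (IsRegular.of_ne_zero two_ne_zero).left
  exact ⟨qKFP_cx_re_nonpos a, singularSpace_kfpHamiltonMap ha⟩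
end
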